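/- Let n ≥ 1, m > n, and let L be a nonempty skew-tabular lattice with boundary functions β0, β1. Then for every array g ∈ L and every color i ∈ {1,…,n}, m_i(g) = Σ_{u=0}^{m−1} ( 2·g_{i,i−u} − g_{i+1,i+1−u} − g_{i−1,i−1−u} ). -/

import Mathlib

noncomputable section

/-! ### Skew-tabular lattices -/

namespace ST

/-- Index positions of a GT parallelogram: rows `0,…,n+1`, row `i` having
columns `C_i = {i, i−1, …, i−(m−1)}`. -/
def Idx (n m : ℕ) : Type :=
  {p : ℕ × ℤ // p.1 ≤ n + 1 ∧ (p.1 : ℤ) - ((m : ℤ) - 1) ≤ p.2 ∧ p.2 ≤ (p.1 : ℤ)}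

/-- The skew-tabular lattice with boundary rows `β0` (row `0`) and `β1` (row `n+1`):
arrays of nonnegative integers weakly increasing along NW-to-SE and NE-to-SW diagonals. -/
def Elt (n m : ℕ) (β0 β1 : ℤ → ℕ) : Type :=
  {g : Idx n m → ℕ //
    (∀ p : Idx n m, p.1.1 = 0 → g p = β0 p.1.2) ∧
    (∀ p : Idx n m, p.1.1 = n + 1 → g p = β1 p.1.2) ∧
    (∀ p q : Idx n m, q.1.1 = p.1.1 + 1 → q.1.2 = p.1.2 → g q ≤ g p) ∧
    (∀ p q : Idx n m, q.1.1 = p.1.1 + 1 → q.1.2 = p.1.2 + 1 → g p ≤ g q)}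

variable {n m : ℕ} {β0 β1 : ℤ → ℕ}

/-- Componentwise comparison of arrays. -/
def le (r s : Elt n m β0 β1) : Prop := ∀ p, r.1 p ≤ s.1 p

/-- The covering edge of color `i`: exactly one entry, in row `i`, is increased by one. -/
def edge (i : ℕ) (r s : Elt n m β0 β1) : Prop :=
  ∃ p : Idx n m, p.1.1 = i ∧ s.1 p = r.1 p + 1 ∧ ∀ q, q ≠ p → s.1 q = r.1 q

/-- The entry of an array at `(i, j)` (junk value `0` outside the index set). -/
def ent (g : Elt n m β0 β1) (i : ℕ) (j : ℤ) : ℕ :=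
  if h : i ≤ n + 1 ∧ (i : ℤ) - ((m : ℤ) - 1) ≤ j ∧ j ≤ (i : ℤ) then g.1 ⟨(i, j), h⟩ else 0

/-- The rank function: the sum of all entries in rows `1,…,n`. -/
def rk (g : Elt n m β0 β1) : ℕ :=
  ∑ i ∈ Finset.range (n + 2), ∑ u ∈ Finset.range m,
    if 1 ≤ i ∧ i ≤ n then ent g i ((i : ℤ) - (u : ℤ)) else 0

/-- The connected component of `g` in the graph of color-`i` covering edges. -/
def comp (i : ℕ) (g : Elt n m β0 β1) : Set (Elt n m β0 β1) :=
  {s | Relation.ReflTransGen (fun x y => edge i x y ∨ edge i y x) g s}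

/-- The integer `m_i(g) = (ρ(g) − min ρ on comp_i(g)) − (max ρ on comp_i(g) − ρ(g))`. -/
def mwt (i : ℕ) (g : Elt n m β0 β1) : ℤ :=
  ((rk g : ℤ) - ((sInf (rk '' comp i g) : ℕ) : ℤ)) -
    (((sSup (rk '' comp i g) : ℕ) : ℤ) - (rk g : ℤ))

end ST

namespace ST

section
variable {n m : ℕ} {β0 β1 : ℤ → ℕ}

lemma ent_eq (g : Elt n m β0 β1) (i : ℕ) (j : ℤ)
    (h : i ≤ n + 1 ∧ (i : ℤ) - ((m : ℤ) - 1) ≤ j ∧ j ≤ (i : ℤ)) :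
    ent g i j = g.1 ⟨(i, j), h⟩ := by
  simp [ent, h]

lemma ent_down (g : Elt n m β0 β1) (i : ℕ) (j : ℤ) (hi : i ≤ n)
    (h1 : (i : ℤ) + 1 - ((m : ℤ) - 1) ≤ j) (h2 : j ≤ (i : ℤ)) :
    ent g (i + 1) j ≤ ent g i j := by
  rw [ent_eq g (i + 1) j (by push_cast; omega), ent_eq g i j (by omega)]
  exact g.2.2.2.1 _ _ rfl rfl

lemma ent_up (g : Elt n m β0 β1) (i : ℕ) (j : ℤ) (hi : i ≤ n)
    (h1 : (i : ℤ) - ((m : ℤ) - 1) ≤ j) (h2 : j ≤ (i : ℤ)) :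
    ent g i j ≤ ent g (i + 1) (j + 1) := by
  rw [ent_eq g (i + 1) (j + 1) (by push_cast; omega), ent_eq g i j (by omega)]
  exact g.2.2.2.2 _ _ rfl rfl

/-- Agreement off row `i`. -/
def Agree (i : ℕ) (r s : Elt n m β0 β1) : Prop := ∀ p : Idx n m, p.1.1 ≠ i → s.1 p = r.1 p

lemma Agree.ent {i : ℕ} {r s : Elt n m β0 β1} (h : Agree i r s) (k : ℕ) (hk : k ≠ i) (j : ℤ) :
    ent s k j = ent r k j := by
  unfold ST.ent
  split_ifs with hh
  · exact h _ hk
  · rfl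

lemma comp_agree {i : ℕ} {g s : Elt n m β0 β1} (h : s ∈ comp i g) : Agree i g s := by
  change Relation.ReflTransGen _ g s at h
  induction h with
  | refl => intro p _; rfl
  | tail _ hbc ih =>
    intro p hp
    rw [← ih p hp]
    rcases hbc with ⟨q, hq, _, h2⟩ | ⟨q, hq, _, h2⟩
    · exact h2 p (by rintro rfl; exact hp hq)
    · exact (h2 p (by rintro rfl; exact hp hq)).symm

/-- Row sum. -/
def R (i : ℕ) (g : Elt n m β0 β1) : ℕ := ∑ u ∈ Finset.range m, ent g i ((i : ℤ) - (u : ℤ))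

lemma rk_agree {i : ℕ} (hi1 : 1 ≤ i) (hin : i ≤ n) {r s : Elt n m β0 β1} (h : Agree i r s) :
    rk s + R i r = rk r + R i s := by
  unfold rk
  rw [← Finset.add_sum_erase (Finset.range (n + 2)) _ (show i ∈ Finset.range (n+2) by simp; omega)]
  rw [← Finset.add_sum_erase (Finset.range (n + 2))
    (fun i => ∑ u ∈ Finset.range m, if 1 ≤ i ∧ i ≤ n then ST.ent r i ((i : ℤ) - (u : ℤ)) else 0)
    (show i ∈ Finset.range (n+2) by simp; omega)]
  have : ∑ x ∈ (Finset.range (n + 2)).erase i,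
      ∑ u ∈ Finset.range m, (if 1 ≤ x ∧ x ≤ n then ST.ent s x ((x : ℤ) - (u : ℤ)) else 0) =
      ∑ x ∈ (Finset.range (n + 2)).erase i,
      ∑ u ∈ Finset.range m, if 1 ≤ x ∧ x ≤ n then ST.ent r x ((x : ℤ) - (u : ℤ)) else 0 := by
    refine Finset.sum_congr rfl fun x hx => Finset.sum_congr rfl fun u _ => ?_
    rw [h.ent x (Finset.ne_of_mem_erase hx)]
  rw [this]
  simp only [hi1, hin, and_self, if_true]
  unfold R
  omega

lemma ent_mono {r s : Elt n m β0 β1} (h : le r s) (k : ℕ) (j : ℤ) : ent r k j ≤ ent s k j := by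
  unfold ent
  split_ifs with hh
  · exact h _
  · rfl

lemma R_mono {r s : Elt n m β0 β1} (i : ℕ) (h : le r s) : R i r ≤ R i s :=
  Finset.sum_le_sum fun _ _ => ent_mono h _ _

lemma R_lt {r s : Elt n m β0 β1} (i : ℕ) (h : le r s) (p : Idx n m) (hp : p.1.1 = i)
    (hlt : r.1 p < s.1 p) : R i r < R i s := by
  obtain ⟨⟨k, j⟩, hh⟩ := p
  simp only at hp hh
  subst hp
  refine Finset.sum_lt_sum (fun _ _ => ent_mono h _ _) ⟨((k : ℤ) - j).toNat, ?_, ?_⟩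
  · simp; omega
  · have : (k : ℤ) - (((k : ℤ) - j).toNat : ℤ) = j := by omega
    rw [this, ent_eq r k j hh, ent_eq s k j hh]
    exact hlt

/-- Convexity along row `i`. -/
lemma convex {i : ℕ} (hi1 : 1 ≤ i) (hin : i ≤ n) {r s : Elt n m β0 β1} (h : Agree i r s)
    (f : Idx n m → ℕ) (h1 : ∀ p, r.1 p ≤ f p) (h2 : ∀ p, f p ≤ s.1 p) :
    (∀ p : Idx n m, p.1.1 = 0 → f p = β0 p.1.2) ∧
    (∀ p : Idx n m, p.1.1 = n + 1 → f p = β1 p.1.2) ∧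
    (∀ p q : Idx n m, q.1.1 = p.1.1 + 1 → q.1.2 = p.1.2 → f q ≤ f p) ∧
    (∀ p q : Idx n m, q.1.1 = p.1.1 + 1 → q.1.2 = p.1.2 + 1 → f p ≤ f q) := by
  have key : ∀ p : Idx n m, p.1.1 ≠ i → f p = r.1 p ∧ f p = s.1 p := by
    intro p hp
    have := h p hp
    have := h1 p
    have := h2 p
    omega
  refine ⟨fun p hp => ?_, fun p hp => ?_, fun p q hpq hj => ?_, fun p q hpq hj => ?_⟩
  · rw [(key p (by omega)).1]; exact r.2.1 p hp
  · rw [(key p (by omega)).1]; exact r.2.2.1 p hp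
  · have a := r.2.2.2.1 p q hpq hj
    have b := s.2.2.2.1 p q hpq hj
    have := h1 p
    have := h2 q
    by_cases hp : p.1.1 = i
    · have := key q (by omega); omega
    · have := key p (by omega); omega
  · have a := r.2.2.2.2 p q hpq hj
    have b := s.2.2.2.2 p q hpq hj
    have := h1 q
    have := h2 p
    by_cases hp : p.1.1 = i
    · have := key q (by omega); omega
    · have := key p (by omega); omega

lemma chain {i : ℕ} (hi1 : 1 ≤ i) (hin : i ≤ n) (s : Elt n m β0 β1) :
    ∀ (N : ℕ) (r : Elt n m β0 β1), Agree i r s → le r s → R i s - R i r ≤ N →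
      Relation.ReflTransGen (edge i) r s := by
  classical
  intro N
  induction N with
  | zero =>
    intro r ha hl hN
    have : r = s := by
      apply Subtype.ext
      funext p
      by_contra hne
      by_cases hp : p.1.1 = i
      · have := R_lt i hl p hp (lt_of_le_of_ne (hl p) hne)
        omega
      · exact hne (ha p hp).symm
    rw [this]
  | succ N ih =>
    intro r ha hl hN
    by_cases hrs : r = s
    · rw [hrs]
    · have : ∃ p, r.1 p ≠ s.1 p := by
        by_contra hcon
        push Not at hcon
        exact hrs (Subtype.ext (funext hcon))
      obtain ⟨p, hp⟩ := this
      have hpi : p.1.1 = i := by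
        by_contra hpi
        exact hp (ha p hpi).symm
      have hlt := lt_of_le_of_ne (hl p) hp
      have h1 : ∀ q, r.1 q ≤ Function.update r.1 p (r.1 p + 1) q := by
        intro q
        by_cases hq : q = p
        · subst hq; simp
        · simp [Function.update_of_ne hq]
      have h2 : ∀ q, Function.update r.1 p (r.1 p + 1) q ≤ s.1 q := by
        intro q
        by_cases hq : q = p
        · subst hq; simpa using hlt
        · simpa [Function.update_of_ne hq] using hl q
      let f : Elt n m β0 β1 := ⟨Function.update r.1 p (r.1 p + 1), convex hi1 hin ha _ h1 h2⟩
      have hf : f.1 p = r.1 p + 1 := by simp [f]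
      have hf' : ∀ q, q ≠ p → f.1 q = r.1 q := fun q hq => by simp [f, Function.update_of_ne hq]
      have e : edge i r f := ⟨p, hpi, hf, hf'⟩
      refine Relation.ReflTransGen.head e (ih f ?_ h2 ?_)
      · intro q hq
        rw [hf' q (by rintro rfl; exact hq hpi)]
        exact ha q hq
      · have := R_lt i (r := r) (s := f) h1 p hpi (by omega)
        omega

lemma mem_comp_up {i : ℕ} (hi1 : 1 ≤ i) (hin : i ≤ n) {r s : Elt n m β0 β1} (ha : Agree i r s)
    (hl : le r s) : s ∈ comp i r :=
  Relation.ReflTransGen.mono (fun _ _ h => Or.inl h) _ _ (chain hi1 hin s _ r ha hl le_rfl)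

lemma mem_comp_down {i : ℕ} (hi1 : 1 ≤ i) (hin : i ≤ n) {r s : Elt n m β0 β1} (ha : Agree i r s)
    (hl : le r s) : r ∈ comp i s := by
  have h : Relation.ReflTransGen (Function.swap (edge i)) s r :=
    Relation.reflTransGen_swap.2 (chain hi1 hin s _ r ha hl le_rfl)
  exact Relation.ReflTransGen.mono (fun _ _ h => Or.inr h) _ _ h

/-- Upper bounds for row `i`. -/
def U (i : ℕ) (g : Elt n m β0 β1) (j : ℤ) : ℕ :=
  if j = i then ent g (i + 1) (j + 1) else min (ent g (i + 1) (j + 1)) (ent g (i - 1) j)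

/-- Lower bounds for row `i`. -/
def D (i : ℕ) (g : Elt n m β0 β1) (j : ℤ) : ℕ :=
  if j = i - ((m : ℤ) - 1) then ent g (i - 1) (j - 1)
  else max (ent g (i - 1) (j - 1)) (ent g (i + 1) j)

lemma le_U {i : ℕ} (hi1 : 1 ≤ i) (hin : i ≤ n) (g : Elt n m β0 β1) (j : ℤ)
    (h1 : (i : ℤ) - ((m : ℤ) - 1) ≤ j) (h2 : j ≤ (i : ℤ)) : ent g i j ≤ U i g j := by
  unfold U
  have a := ent_up g i j hin h1 h2
  split_ifs with h
  · exact a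
  · have b := ent_down g (i - 1) j (by omega) (by omega) (by omega)
    rw [show i - 1 + 1 = i by omega] at b
    exact le_min a b

lemma D_le {i : ℕ} (hi1 : 1 ≤ i) (hin : i ≤ n) (g : Elt n m β0 β1) (j : ℤ)
    (h1 : (i : ℤ) - ((m : ℤ) - 1) ≤ j) (h2 : j ≤ (i : ℤ)) : D i g j ≤ ent g i j := by
  unfold D
  have a := ent_up g (i - 1) (j - 1) (by omega) (by omega) (by omega)
  rw [show i - 1 + 1 = i by omega, sub_add_cancel] at a
  split_ifs with h
  · exact a
  · exact max_le a (ent_down g i j (by omega) (by omega) (by omega))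

lemma U_congr {i : ℕ} (hi1 : 1 ≤ i) {r s : Elt n m β0 β1} (h : Agree i r s) (j : ℤ) :
    U i s j = U i r j := by
  unfold U
  rw [h.ent (i + 1) (by omega), h.ent (i - 1) (by omega)]

lemma D_congr {i : ℕ} (hi1 : 1 ≤ i) {r s : Elt n m β0 β1} (h : Agree i r s) (j : ℤ) :
    D i s j = D i r j := by
  unfold D
  rw [h.ent (i + 1) (by omega), h.ent (i - 1) (by omega)]

lemma ent_self (g : Elt n m β0 β1) (p : Idx n m) : g.1 p = ent g p.1.1 p.1.2 :=
  (ent_eq g _ _ p.2).symm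

/-- An array replacing row `i` with `F` is valid if `F` lies between `D` and `U`. -/
lemma rep {i : ℕ} (hi1 : 1 ≤ i) (hin : i ≤ n) (g : Elt n m β0 β1) (F : ℤ → ℕ)
    (hF : ∀ j : ℤ, (i : ℤ) - ((m : ℤ) - 1) ≤ j → j ≤ (i : ℤ) → D i g j ≤ F j ∧ F j ≤ U i g j) :
    ∃ s : Elt n m β0 β1, Agree i g s ∧
      ∀ j : ℤ, (i : ℤ) - ((m : ℤ) - 1) ≤ j → j ≤ (i : ℤ) → ent s i j = F j := by
  classical
  obtain ⟨f, fpos, fneg⟩ : ∃ f : Idx n m → ℕ, (∀ p, p.1.1 = i → f p = F p.1.2) ∧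
      (∀ p, p.1.1 ≠ i → f p = g.1 p) :=
    ⟨fun p => if p.1.1 = i then F p.1.2 else g.1 p, fun p hp => if_pos hp, fun p hp => if_neg hp⟩
  refine ⟨⟨f, ?_, ?_, ?_, ?_⟩, ?_, ?_⟩
  · intro p hp
    rw [fneg p (by omega)]; exact g.2.1 p hp
  · intro p hp
    rw [fneg p (by omega)]; exact g.2.2.1 p hp
  · intro p q hpq hj
    have hpp := p.2
    have hqq := q.2
    by_cases hp : p.1.1 = i
    · rw [fpos p hp, fneg q (by omega)]
      have := (hF p.1.2 (by omega) (by omega)).1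
      unfold D at this
      rw [if_neg (by omega)] at this
      rw [ent_self g q, hpq, hp, hj]
      exact (le_max_right _ _).trans this
    · by_cases hq : q.1.1 = i
      · rw [fneg p hp, fpos q hq]
        have := (hF q.1.2 (by omega) (by omega)).2
        unfold U at this
        rw [if_neg (by omega)] at this
        rw [ent_self g p, show p.1.1 = i - 1 by omega, ← hj]
        exact this.trans (min_le_right _ _)
      · rw [fneg p hp, fneg q hq]
        exact g.2.2.2.1 p q hpq hj
  · intro p q hpq hj
    have hpp := p.2
    have hqq := q.2
    by_cases hp : p.1.1 = i
    · rw [fpos p hp, fneg q (by omega)]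
      have := (hF p.1.2 (by omega) (by omega)).2
      rw [ent_self g q, hpq, hp, hj]
      refine this.trans ?_
      unfold U
      split_ifs
      · exact le_rfl
      · exact min_le_left _ _
    · by_cases hq : q.1.1 = i
      · rw [fneg p hp, fpos q hq]
        have := (hF q.1.2 (by omega) (by omega)).1
        rw [ent_self g p, show p.1.1 = i - 1 by omega, show p.1.2 = q.1.2 - 1 by omega]
        refine le_trans ?_ this
        unfold D
        split_ifs
        · exact le_rfl
        · exact le_max_left _ _
      · rw [fneg p hp, fneg q hq]
        exact g.2.2.2.2 p q hpq hj
  · intro p hp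
    exact fneg p hp
  · intro j h1 h2
    have hh : i ≤ n + 1 ∧ (i : ℤ) - ((m : ℤ) - 1) ≤ j ∧ j ≤ (i : ℤ) := by omega
    exact (ent_eq _ i j hh).trans (fpos ⟨(i, j), hh⟩ rfl)

lemma sum_DU {i : ℕ} (hi1 : 1 ≤ i) (g : Elt n m β0 β1) :
    ∑ u ∈ Finset.range m, (D i g ((i : ℤ) - (u : ℤ)) + U i g ((i : ℤ) - (u : ℤ))) =
    ∑ u ∈ Finset.range m, (ent g (i + 1) ((i : ℤ) + 1 - (u : ℤ)) +
        ent g (i - 1) ((i : ℤ) - 1 - (u : ℤ))) := by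
  rcases m with _ | m
  · simp
  rw [Finset.sum_add_distrib, Finset.sum_add_distrib]
  rw [Finset.sum_range_succ (fun u : ℕ => D i g ((i : ℤ) - (u : ℤ))),
    Finset.sum_range_succ' (fun u : ℕ => U i g ((i : ℤ) - (u : ℤ))),
    Finset.sum_range_succ' (fun u : ℕ => ent g (i + 1) ((i : ℤ) + 1 - (u : ℤ))),
    Finset.sum_range_succ (fun u : ℕ => ent g (i - 1) ((i : ℤ) - 1 - (u : ℤ)))]
  have e1 : D i g ((i : ℤ) - (m : ℤ)) = ent g (i - 1) ((i : ℤ) - 1 - (m : ℤ)) := by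
    unfold D
    rw [if_pos (by push_cast; omega)]
    congr 1; omega
  have e2 : U i g ((i : ℤ) - ((0 : ℕ) : ℤ)) = ent g (i + 1) ((i : ℤ) + 1 - ((0 : ℕ) : ℤ)) := by
    unfold U
    rw [if_pos (by push_cast; omega)]
    congr 1; try omega
  have e3 : ∑ u ∈ Finset.range m, D i g ((i : ℤ) - (u : ℤ)) +
      ∑ u ∈ Finset.range m, U i g ((i : ℤ) - ((u + 1 : ℕ) : ℤ)) =
      ∑ u ∈ Finset.range m, ent g (i + 1) ((i : ℤ) + 1 - ((u + 1 : ℕ) : ℤ)) +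
      ∑ u ∈ Finset.range m, ent g (i - 1) ((i : ℤ) - 1 - (u : ℤ)) := by
    rw [← Finset.sum_add_distrib, ← Finset.sum_add_distrib]
    refine Finset.sum_congr rfl fun u hu => ?_
    rw [Finset.mem_range] at hu
    unfold D U
    rw [if_neg (by push_cast; omega), if_neg (by push_cast; omega)]
    rw [show (i : ℤ) - (u : ℤ) - 1 = (i : ℤ) - 1 - (u : ℤ) by ring,
      show (i : ℤ) - ((u + 1 : ℕ) : ℤ) + 1 = (i : ℤ) - (u : ℤ) by push_cast; ring,
      show (i : ℤ) - ((u + 1 : ℕ) : ℤ) = (i : ℤ) - 1 - (u : ℤ) by push_cast; ring,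
      show (i : ℤ) + 1 - ((u + 1 : ℕ) : ℤ) = (i : ℤ) - (u : ℤ) by push_cast; ring]
    omega
  rw [e1, e2]
  omega

end

end ST

/-- in a nonempty skew-tabular lattice, `m_i(g)` is given by the explicit
Gelfand–Tsetlin-type formula. -/
theorem statement_10 (n m : ℕ) (hn : 1 ≤ n) (hm : n < m) (β0 β1 : ℤ → ℕ)
    (g : ST.Elt n m β0 β1) (i : ℕ) (hi1 : 1 ≤ i) (hin : i ≤ n) :
    ST.mwt i g = ∑ u ∈ Finset.range m,
      (2 * (ST.ent g i ((i : ℤ) - (u : ℤ)) : ℤ) -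
        (ST.ent g (i + 1) ((i : ℤ) + 1 - (u : ℤ)) : ℤ) -
        (ST.ent g (i - 1) ((i : ℤ) - 1 - (u : ℤ)) : ℤ)) := by
  open ST in
  have hDU : ∀ j : ℤ, (i : ℤ) - ((m : ℤ) - 1) ≤ j → j ≤ (i : ℤ) → D i g j ≤ U i g j :=
    fun j h1 h2 => (D_le hi1 hin g j h1 h2).trans (le_U hi1 hin g j h1 h2)
  obtain ⟨a, ha, ha'⟩ := ST.rep hi1 hin g (ST.D i g) fun j h1 h2 => ⟨le_rfl, hDU j h1 h2⟩
  obtain ⟨b, hb, hb'⟩ := ST.rep hi1 hin g (ST.U i g) fun j h1 h2 => ⟨hDU j h1 h2, le_rfl⟩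
  have la : ∀ s, ST.Agree i g s → ST.le a s := by
    intro s hs p
    have hp := p.2
    by_cases h : p.1.1 = i
    · rw [ST.ent_self a p, ST.ent_self s p, h, ha' _ (by omega) (by omega), ← ST.D_congr hi1 hs]
      exact ST.D_le hi1 hin s _ (by omega) (by omega)
    · rw [ha p h, hs p h]
  have lb : ∀ s, ST.Agree i g s → ST.le s b := by
    intro s hs p
    have hp := p.2
    by_cases h : p.1.1 = i
    · rw [ST.ent_self b p, ST.ent_self s p, h, hb' _ (by omega) (by omega), ← ST.U_congr hi1 hs]
      exact ST.le_U hi1 hin s _ (by omega) (by omega)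
    · rw [hb p h, hs p h]
  have hgg : ST.Agree i g g := fun _ _ => rfl
  have ma : a ∈ ST.comp i g := ST.mem_comp_down hi1 hin (fun p hp => (ha p hp).symm) (la g hgg)
  have mb : b ∈ ST.comp i g := ST.mem_comp_up hi1 hin hb (lb g hgg)
  have ra := ST.rk_agree hi1 hin ha
  have rb := ST.rk_agree hi1 hin hb
  have hinf : sInf (ST.rk '' ST.comp i g) = ST.rk a := by
    refine IsLeast.csInf_eq ⟨⟨a, ma, rfl⟩, ?_⟩
    rintro _ ⟨s, hs, rfl⟩
    have h1 := ST.comp_agree hs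
    have h2 := ST.rk_agree hi1 hin h1
    have h3 := ST.R_mono i (la s h1)
    omega
  have hsup : sSup (ST.rk '' ST.comp i g) = ST.rk b := by
    refine IsGreatest.csSup_eq ⟨⟨b, mb, rfl⟩, ?_⟩
    rintro _ ⟨s, hs, rfl⟩
    have h1 := ST.comp_agree hs
    have h2 := ST.rk_agree hi1 hin h1
    have h3 := ST.R_mono i (lb s h1)
    omega
  have hab : ST.R i a + ST.R i b = ∑ u ∈ Finset.range m,
      (ST.D i g ((i : ℤ) - (u : ℤ)) + ST.U i g ((i : ℤ) - (u : ℤ))) := by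
    unfold ST.R
    rw [← Finset.sum_add_distrib]
    refine Finset.sum_congr rfl fun u hu => ?_
    rw [Finset.mem_range] at hu
    rw [ha' _ (by omega) (by omega), hb' _ (by omega) (by omega)]
  rw [ST.sum_DU hi1, Finset.sum_add_distrib] at hab
  unfold ST.mwt
  rw [hinf, hsup, Finset.sum_sub_distrib, Finset.sum_sub_distrib, ← Finset.mul_sum]
  have hR : (ST.R i g : ℤ) = ∑ u ∈ Finset.range m, (ST.ent g i ((i : ℤ) - (u : ℤ)) : ℤ) := by
    unfold ST.R; push_cast; rfl
  rw [← hR]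
  zify at hab ra rb
  linarith

end
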